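/- For any ADF D there exists n ∈ ℕ such that Γ_D^n(v_u) is a fixed point of Γ_D, and this fixed point is the least fixed point of Γ_D: every interpretation v of D with Γ_D(v) = v satisfies Γ_D^n(v_u) ≤_i v. In particular, Γ_D has a least fixed point, the grounded interpretation grd(D). -/

import Mathlib

/-- Three truth values: true, false, undecided. -/
inductive TV : Type
  | t | f | u
deriving DecidableEq, Repr

/-- The information order on truth values: u <_i t and u <_i f. -/
def TV.ile (x y : TV) : Prop := x = TV.u ∨ x = y

/-- The information order on interpretations, extended pointwise. -/
def ILE {A : Type*} (v w : A → TV) : Prop := ∀ a, TV.ile (v a) (w a)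

/-- An abstract dialectical framework on a set of arguments `A`:
each argument `a` has an acceptance condition `C a : (A → Bool) → Bool`. -/
structure ADF (A : Type*) where
  C : A → (A → Bool) → Bool

/-- The trivial interpretation mapping every argument to undecided. -/
def trivialInterp (A : Type*) : A → TV := fun _ => TV.u

/-- The parents of `a` are the arguments on which its acceptance condition depends. -/
def ADF.parents {A : Type*} [DecidableEq A] (D : ADF A) (a : A) : Set A :=
  {b | ∃ w : A → Bool, D.C a w ≠ D.C a (Function.update w b (!w b))}

/-- A two-valued assignment `w` completes a three-valued interpretation `v`. -/
def Completes {A : Type*} (w : A → Bool) (v : A → TV) : Prop :=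
  ∀ b, (v b = TV.t → w b = true) ∧ (v b = TV.f → w b = false)

/-- `φ` is irrefutable under `v`: every completion of `v` makes `φ` true. -/
def Irrefutable {A : Type*} (φ : (A → Bool) → Bool) (v : A → TV) : Prop :=
  ∀ w : A → Bool, Completes w v → φ w = true

/-- `φ` is unsatisfiable under `v`: every completion of `v` makes `φ` false. -/
def Unsat {A : Type*} (φ : (A → Bool) → Bool) (v : A → TV) : Prop :=
  ∀ w : A → Bool, Completes w v → φ w = false

open Classical in
/-- The characteristic operator Γ_D of an ADF. -/
noncomputable def Gamma {A : Type*} (D : ADF A) (v : A → TV) : A → TV := fun a =>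
  if Irrefutable (D.C a) v then TV.t
  else if Unsat (D.C a) v then TV.f
  else TV.u

open Classical in
/-- `v|_P`: agrees with `v` on `P` and is undecided elsewhere. -/
noncomputable def restrictTV {A : Type*} (v : A → TV) (P : Set A) : A → TV :=
  fun b => if b ∈ P then v b else TV.u

/-- Strong acceptability/deniability of an argument with respect to interpretation `v`
and set `S`, relative to an excluded set `E` (the first index). An argument `a` with
`v a = t` (resp. `v a = f`) is strongly acceptable (resp. strongly deniable) iff there is
`P ⊆ (parents a ∩ S) \ E` with `φ_a^{v|_P}` irrefutable (resp. unsatisfiable) and every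
`p ∈ P` strongly acceptable/deniable relative to `E ∪ {p}`. -/
inductive SJrel {A : Type*} [DecidableEq A] (D : ADF A) (v : A → TV) (S : Set A) :
    Set A → A → Prop
  | acc (E : Set A) (a : A) (P : Set A)
      (ha : v a = TV.t)
      (hP : P ⊆ (D.parents a ∩ S) \ E)
      (hirr : Irrefutable (D.C a) (restrictTV v P))
      (hrec : ∀ p ∈ P, SJrel D v S (E ∪ {p}) p) : SJrel D v S E a
  | den (E : Set A) (a : A) (P : Set A)
      (ha : v a = TV.f)
      (hP : P ⊆ (D.parents a ∩ S) \ E)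
      (hunsat : Unsat (D.C a) (restrictTV v P))
      (hrec : ∀ p ∈ P, SJrel D v S (E ∪ {p}) p) : SJrel D v S E a

/-- `a` is strongly acceptable/deniable w.r.t. `v` and `S`
(i.e., relative to the excluded set `{a}`). -/
def StronglyJustified {A : Type*} [DecidableEq A] (D : ADF A) (v : A → TV)
    (S : Set A) (a : A) : Prop :=
  SJrel D v S {a} a

/-- `S` is a least set for `a` with respect to `v`. -/
def LeastSet {A : Type*} [DecidableEq A] (D : ADF A) (v : A → TV)
    (a : A) (S : Set A) : Prop :=
  StronglyJustified D v S a ∧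
  ∀ S' : Set A, S'.ncard < S.ncard → ¬ StronglyJustified D v S' a

/-- An interpretation is strongly admissible iff every argument assigned `t`/`f`
is strongly acceptable/deniable w.r.t. `v` and some set `S`. -/
def StronglyAdmissible {A : Type*} [DecidableEq A] (D : ADF A) (v : A → TV) : Prop :=
  ∀ a : A, v a ≠ TV.u → ∃ S : Set A, StronglyJustified D v S a

/-- `g` is the grounded interpretation of `D`: the least fixed point of `Γ_D`. -/
def IsGrounded {A : Type*} (D : ADF A) (g : A → TV) : Prop :=
  Gamma D g = g ∧ ∀ w : A → TV, Gamma D w = w → ILE g w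

/-- An interpretation is admissible iff `v ≤_i Γ_D(v)`. -/
def Admissible {A : Type*} (D : ADF A) (v : A → TV) : Prop :=
  ILE v (Gamma D v)

/-- An interpretation is conflict-free. -/
def ConflictFree {A : Type*} (D : ADF A) (v : A → TV) : Prop :=
  ∀ a : A, (v a = TV.t → ∃ w : A → Bool, Completes w v ∧ D.C a w = true) ∧
           (v a = TV.f → Unsat (D.C a) v)

/-- The join of two interpretations: take `v`'s value where defined, else `w`'s. -/
def joinI {A : Type*} (v w : A → TV) : A → TV :=
  fun a => if v a = TV.u then w a else v a

/-!
Refining an interpretation leaves fewer completions, but never none, so an acceptance condition that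
is irrefutable or unsatisfiable keeps its status and is never both: `Γ_D` is monotone for the
information order. As there are only finitely many interpretations, the ascending chain of iterates
of `Γ_D` from the least interpretation becomes stationary, and by monotonicity it stays below every
fixed point.
-/

open Function

section Order

variable {α : Type*} [PartialOrder α] [WellFoundedGT α] {f : α → α}

theorem exists_isFixedPt_iterate_of_le_map (hf : Monotone f) {x : α} (hx : x ≤ f x) :
    ∃ n : ℕ, IsFixedPt f (f^[n] x) := by
  obtain ⟨n, hn⟩ :=
    WellFoundedGT.monotone_chain_condition ⟨fun n => f^[n] x, hf.monotone_iterate_of_le_map hx⟩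
  exact ⟨n, (iterate_succ_apply' f n x).symm.trans (hn (n + 1) n.le_succ).symm⟩

theorem exists_isLeast_fixedPoints_iterate_bot [OrderBot α] (hf : Monotone f) :
    ∃ n : ℕ, IsLeast (fixedPoints f) (f^[n] ⊥) := by
  obtain ⟨n, hn⟩ := exists_isFixedPt_iterate_of_le_map hf (bot_le : ⊥ ≤ f ⊥)
  refine ⟨n, hn, fun y hy => ?_⟩
  calc f^[n] ⊥ ≤ f^[n] y := hf.iterate n bot_le
    _ = y := IsFixedPt.iterate hy n

end Order

namespace TV

theorem ile_iff {x y : TV} : x.ile y ↔ (x = t → y = t) ∧ (x = f → y = f) := by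
  cases x <;> simp [ile, eq_comm]

/-- The information order `≤_i` as the order of `TV`; interpretations `A → TV` then carry it
pointwise. -/
instance : PartialOrder TV where
  le := ile
  le_refl _ := Or.inr rfl
  le_trans _ _ _ hxy hyz := hxy.elim Or.inl fun h => h ▸ hyz
  le_antisymm _ _ hxy hyx := hxy.elim (fun hx => hyx.elim (hx.trans ·.symm) Eq.symm) id

instance : OrderBot TV where
  bot := u
  bot_le _ := Or.inl rfl

instance : Fintype TV where
  elems := {t, f, u}
  complete x := by cases x <;> decide

end TV

section Interpretations

variable {A : Type*} {v v' : A → TV} {φ : (A → Bool) → Bool}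

theorem ile_iff_le : ILE v v' ↔ v ≤ v' := Iff.rfl

theorem trivialInterp_eq_bot : trivialInterp A = ⊥ := rfl

theorem Completes.anti {w : A → Bool} (hw : Completes w v') (h : v ≤ v') : Completes w v :=
  fun b => ⟨(hw b).1 ∘ (TV.ile_iff.1 (h b)).1, (hw b).2 ∘ (TV.ile_iff.1 (h b)).2⟩

theorem exists_completes (v : A → TV) : ∃ w : A → Bool, Completes w v :=
  ⟨fun b => decide (v b = TV.t), fun b => ⟨fun hb => by simp [hb], fun hb => by simp [hb]⟩⟩

theorem Irrefutable.mono (hφ : Irrefutable φ v) (h : v ≤ v') : Irrefutable φ v' :=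
  fun w hw => hφ w (hw.anti h)

theorem Unsat.mono (hφ : Unsat φ v) (h : v ≤ v') : Unsat φ v' :=
  fun w hw => hφ w (hw.anti h)

theorem Unsat.not_irrefutable (hφ : Unsat φ v) : ¬ Irrefutable φ v := by
  intro hirr
  obtain ⟨w, hw⟩ := exists_completes v
  exact Bool.false_ne_true ((hφ w hw).symm.trans (hirr w hw))

end Interpretations

section Gamma

variable {A : Type*} {D : ADF A} {v : A → TV} {a : A}

theorem gamma_eq_t_iff : Gamma D v a = TV.t ↔ Irrefutable (D.C a) v := by
  unfold Gamma
  split_ifs <;> simp_all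

theorem gamma_eq_f_iff : Gamma D v a = TV.f ↔ Unsat (D.C a) v := by
  have hdisj : Unsat (D.C a) v → ¬ Irrefutable (D.C a) v := Unsat.not_irrefutable
  unfold Gamma
  split_ifs <;> simp_all

theorem gamma_monotone (D : ADF A) : Monotone (Gamma D) := by
  intro v v' h a
  refine TV.ile_iff.2 ⟨?_, ?_⟩
  · simpa only [gamma_eq_t_iff] using fun hirr => Irrefutable.mono hirr h
  · simpa only [gamma_eq_f_iff] using fun hunsat => Unsat.mono hunsat h

end Gamma

/-- Iterating Γ_D from the trivial interpretation reaches a fixed point,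
which is the least fixed point of Γ_D (the grounded interpretation). -/
theorem gamma_least_fixed_point {A : Type*} [Fintype A] [DecidableEq A] (D : ADF A) :
    ∃ n : ℕ, Gamma D ((Gamma D)^[n] (trivialInterp A)) = (Gamma D)^[n] (trivialInterp A) ∧
      ∀ v : A → TV, Gamma D v = v → ILE ((Gamma D)^[n] (trivialInterp A)) v := by
  obtain ⟨n, hfixed, hleast⟩ := exists_isLeast_fixedPoints_iterate_bot (gamma_monotone D)
  simp only [trivialInterp_eq_bot, ile_iff_le]
  exact ⟨n, hfixed, fun v hv => hleast hv⟩
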